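/- arXiv:2502.15931 — 3 statements merged into one kernel-verified Lean document; each statement's English description precedes it below -/
import Mathlib

section
/- The matrix (I − A)L + A is invertible, and B := ((I − A)L + A)^{-1}A satisfies B = (L + Ã)^{-1}Ã, where Ã = diag(α̃_1,…,α̃_n) with α̃_i = α_i/(1 − α_i); in particular, when all α_i are equal the matrix B is symmetric positive definite. -/
/-!
The diagonal matrix `1 - A` is invertible and `A = (1 - A) Ã`, so
`(1 - A) L + A = (1 - A) (L + Ã)`. The Laplacian is positive semidefinite, because its quadratic
form is `½ ∑ w_ij (x_i - x_j)²` (`dotProduct_Lap_mulVec`), and `Ã` has positive diagonal; hence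
`L + Ã` is positive definite and in particular invertible. Cancelling the factor `1 - A` in
`((1 - A) (L + Ã))⁻¹ (1 - A) Ã` gives `B = (L + Ã)⁻¹ Ã`. When all `α_i` are equal, `Ã` is a positive
scalar matrix, so `B` is a positive multiple of the inverse of a positive definite matrix.
-/

open Matrix

/-- The graph Laplacian `L = D - W` of a weighted graph with weight matrix `W`. -/
noncomputable def Lap {n : ℕ} (W : Matrix (Fin n) (Fin n) ℝ) : Matrix (Fin n) (Fin n) ℝ :=
  Matrix.diagonal (fun i => ∑ j, W i j) - W

theorem dotProduct_Lap_mulVec {n : ℕ} {W : Matrix (Fin n) (Fin n) ℝ} (hW : W.IsSymm)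
    (x : Fin n → ℝ) :
    x ⬝ᵥ (Lap W *ᵥ x) = (∑ i, ∑ j, W i j * (x i - x j) ^ 2) / 2 := by
  have h1 : x ⬝ᵥ (Lap W *ᵥ x) = ∑ i, ∑ j, (W i j * x i ^ 2 - W i j * x i * x j) := by
    simp only [Lap, sub_mulVec, dotProduct, Pi.sub_apply, mulVec_diagonal]
    refine Finset.sum_congr rfl fun i _ => ?_
    simp only [mulVec, dotProduct, Finset.sum_sub_distrib, ← Finset.sum_mul, mul_sub,
      Finset.mul_sum]
    congr 1
    · ring
    · exact Finset.sum_congr rfl fun j _ => by ring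
  -- The same sum with the two indices exchanged; averaging both forms gives the squares.
  have h2 : x ⬝ᵥ (Lap W *ᵥ x) = ∑ i, ∑ j, (W i j * x j ^ 2 - W i j * x i * x j) := by
    rw [h1, Finset.sum_comm]
    refine Finset.sum_congr rfl fun i _ => Finset.sum_congr rfl fun j _ => ?_
    rw [hW.apply i j]
    ring
  have h3 : ∑ i, ∑ j, W i j * (x i - x j) ^ 2 = x ⬝ᵥ (Lap W *ᵥ x) + x ⬝ᵥ (Lap W *ᵥ x) := by
    nth_rewrite 1 [h1]
    rw [h2, ← Finset.sum_add_distrib]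
    refine Finset.sum_congr rfl fun i _ => ?_
    rw [← Finset.sum_add_distrib]
    exact Finset.sum_congr rfl fun j _ => by ring
  rw [h3]
  ring

theorem posSemidef_Lap {n : ℕ} {W : Matrix (Fin n) (Fin n) ℝ} (hW : W.IsSymm)
    (hWnonneg : ∀ i j, 0 ≤ W i j) : (Lap W).PosSemidef := by
  refine .of_dotProduct_mulVec_nonneg ?_ fun x => ?_
  · have h : (Lap W).IsSymm := (isSymm_diagonal _).sub hW
    rwa [IsHermitian, conjTranspose_eq_transpose_of_trivial]
  · rw [star_trivial, dotProduct_Lap_mulVec hW]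
    have := Finset.sum_nonneg fun i (_ : i ∈ Finset.univ) =>
      Finset.sum_nonneg fun j (_ : j ∈ Finset.univ) =>
        mul_nonneg (hWnonneg i j) (sq_nonneg (x i - x j))
    positivity

/-- The matrix `(I − A)L + A` is invertible, and `B := ((I − A)L + A)⁻¹ A` satisfies
`B = (L + Ã)⁻¹ Ã`, where `Ã = diag(α̃_1,…,α̃_n)` with `α̃_i = α_i/(1 − α_i)`;
in particular, when all `α_i` are equal, `B` is symmetric positive definite. -/
theorem stmt0 (n : ℕ) (W : Matrix (Fin (n + 1)) (Fin (n + 1)) ℝ)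
    (hWsymm : W.IsSymm) (hWnonneg : ∀ i j, 0 ≤ W i j) (hWdiag : ∀ i, W i i = 0)
    (α : Fin (n + 1) → ℝ) (hα : ∀ i, α i ∈ Set.Ioo (0 : ℝ) 1) :
    IsUnit ((1 - Matrix.diagonal α) * Lap W + Matrix.diagonal α) ∧
    ((1 - Matrix.diagonal α) * Lap W + Matrix.diagonal α)⁻¹ * Matrix.diagonal α =
      (Lap W + Matrix.diagonal (fun i => α i / (1 - α i)))⁻¹ *
        Matrix.diagonal (fun i => α i / (1 - α i)) ∧
    (∀ c : ℝ, (∀ i, α i = c) →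
      (((1 - Matrix.diagonal α) * Lap W + Matrix.diagonal α)⁻¹ * Matrix.diagonal α).IsSymm ∧
      (((1 - Matrix.diagonal α) * Lap W + Matrix.diagonal α)⁻¹ * Matrix.diagonal α).PosDef) := by
  have hone : ∀ i, 0 < 1 - α i := fun i => sub_pos.2 (hα i).2
  have hpos : ∀ i, 0 < α i / (1 - α i) := fun i => div_pos (hα i).1 (hone i)
  set T : Matrix (Fin (n + 1)) (Fin (n + 1)) ℝ := diagonal fun i => α i / (1 - α i) with hT
  have hPD : (Lap W + T).PosDef :=
    PosDef.posSemidef_add (posSemidef_Lap hWsymm hWnonneg) (PosDef.diagonal hpos)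
  have hU : IsUnit (1 - diagonal α) := by
    rw [← diagonal_one, diagonal_sub, isUnit_diagonal, Pi.isUnit_iff]
    exact fun i => (hone i).ne'.isUnit
  have hA : diagonal α = (1 - diagonal α) * T := by
    rw [hT, ← diagonal_one, diagonal_sub, diagonal_mul_diagonal]
    congr 1
    funext i
    exact (mul_div_cancel₀ _ (hone i).ne').symm
  have hfac : (1 - diagonal α) * Lap W + diagonal α = (1 - diagonal α) * (Lap W + T) := by
    rw [mul_add, ← hA]
  have hB : ((1 - diagonal α) * Lap W + diagonal α)⁻¹ * diagonal α = (Lap W + T)⁻¹ * T := by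
    rw [hfac, Matrix.mul_inv_rev, Matrix.mul_assoc]
    nth_rewrite 2 [hA]
    rw [nonsing_inv_mul_cancel_left _ _ ((isUnit_iff_isUnit_det _).1 hU)]
  refine ⟨hfac ▸ hU.mul hPD.isUnit, hB, fun c hc => ?_⟩
  have hBPD : ((Lap W + T)⁻¹ * T).PosDef := by
    have hTc : T = (c / (1 - c)) • (1 : Matrix (Fin (n + 1)) (Fin (n + 1)) ℝ) := by
      simp only [hT, hc, smul_one_eq_diagonal]
    have hcpos : 0 < c / (1 - c) := hc 0 ▸ hpos 0
    have h := hPD.inv.smul hcpos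
    rwa [← mul_one (Lap W + T)⁻¹, ← mul_smul_comm, ← hTc] at h
  rw [hB]
  refine ⟨?_, hBPD⟩
  have h := hBPD.isHermitian
  rwa [IsHermitian, conjTranspose_eq_transpose_of_trivial] at h
end

section
/- The vector z = Bs is the unique Nash equilibrium of the Friedkin–Johnsen opinion formation game: z is the unique vector in ℝⁿ such that for every agent i, the coordinate z_i minimizes the map t ↦ (1 − α_i)Σ_j w_ij(t − z_j)² + α_i(t − s_i)² over t ∈ ℝ (holding the other coordinates of z fixed). -/
/-!
Agent `i`'s cost is a quadratic polynomial in its own opinion: moving from `z i` to `z i + d` changes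
it by `k d² + 2 d g`, where `k = (1 - α i) ∑ j, W i j + α i > 0` and `g` is the `i`-th coordinate of
`M z - A s`, with `M = (I - A) L + A` (`cost_update`; this uses `W i i = 0`). Such a polynomial is
nonnegative for all `d` exactly when `g = 0`, so the equilibria are the solutions of `M z = A s`
(`nash_iff`). Since the off-diagonal row sums of `M` are `(1 - α i) ∑ j, W i j`, in absolute value,
and `M i i` exceeds this by `α i > 0`, `M` is strictly diagonally dominant and hence invertible
(`isUnit_det_Mmat`). The only equilibrium is therefore `M⁻¹ A s = B s`.
-/

open Matrix

/-- `B = ((I − A)L + A)⁻¹ A`. -/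
noncomputable def Bmat {n : ℕ} (W : Matrix (Fin n) (Fin n) ℝ) (α : Fin n → ℝ) :
    Matrix (Fin n) (Fin n) ℝ :=
  ((1 - Matrix.diagonal α) * Lap W + Matrix.diagonal α)⁻¹ * Matrix.diagonal α

/-- The Friedkin–Johnsen cost of agent `i` at opinion profile `z`:
`c_i(z) = (1 − α_i) Σ_j w_ij (z_i − z_j)² + α_i (z_i − s_i)²`. -/
noncomputable def cost {n : ℕ} (W : Matrix (Fin n) (Fin n) ℝ) (α : Fin n → ℝ)
    (s : Fin n → ℝ) (i : Fin n) (z : Fin n → ℝ) : ℝ :=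
  (1 - α i) * ∑ j, W i j * (z i - z j) ^ 2 + α i * (z i - s i) ^ 2

/-- The matrix `M = (I - A) L + A` whose inverse enters the definition of `Bmat`. -/
noncomputable def Mmat {n : ℕ} (W : Matrix (Fin n) (Fin n) ℝ) (α : Fin n → ℝ) :
    Matrix (Fin n) (Fin n) ℝ :=
  (1 - Matrix.diagonal α) * Lap W + Matrix.diagonal α

lemma Mmat_apply {n : ℕ} (W : Matrix (Fin n) (Fin n) ℝ) (α : Fin n → ℝ) (i j : Fin n) :
    Mmat W α i j =
      (1 - α i) * ((if i = j then ∑ k, W i k else 0) - W i j) + if i = j then α i else 0 := by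
  have h : (1 - Matrix.diagonal α : Matrix (Fin n) (Fin n) ℝ)
      = Matrix.diagonal (fun i => 1 - α i) := by
    rw [← Matrix.diagonal_one, Matrix.diagonal_sub]
  simp only [Mmat, h, Lap, Matrix.add_apply, Matrix.diagonal_mul, Matrix.sub_apply,
    Matrix.diagonal_apply]

lemma Mmat_mulVec {n : ℕ} (W : Matrix (Fin n) (Fin n) ℝ) (α z : Fin n → ℝ) (i : Fin n) :
    (Mmat W α *ᵥ z) i = (1 - α i) * ∑ j, W i j * (z i - z j) + α i * z i := by
  calc (Mmat W α *ᵥ z) i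
      = ∑ j, ((1 - α i) * ((if i = j then (∑ k, W i k) * z j else 0) - W i j * z j)
          + if i = j then α i * z j else 0) := by
        simp only [Matrix.mulVec, dotProduct, Mmat_apply]
        refine Finset.sum_congr rfl fun j _ => ?_
        split_ifs <;> ring
    _ = (1 - α i) * ∑ j, W i j * (z i - z j) + α i * z i := by
        simp [Finset.sum_add_distrib, ← Finset.mul_sum, Finset.sum_sub_distrib, mul_sub,
          ← Finset.sum_mul]

lemma isUnit_det_Mmat {n : ℕ} (W : Matrix (Fin n) (Fin n) ℝ) (hW : ∀ i j, 0 ≤ W i j)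
    (hdiag : ∀ i, W i i = 0) (α : Fin n → ℝ) (hα : ∀ i, α i ∈ Set.Ioo (0 : ℝ) 1) :
    IsUnit (Mmat W α).det := by
  refine isUnit_iff_ne_zero.mpr (det_ne_zero_of_sum_row_lt_diag fun i => ?_)
  obtain ⟨h0, h1⟩ := hα i
  have hs : 0 ≤ (1 - α i) * ∑ k, W i k :=
    mul_nonneg (by linarith) (Finset.sum_nonneg fun k _ => hW i k)
  have hoff : ∑ j ∈ Finset.univ.erase i, ‖Mmat W α i j‖ = (1 - α i) * ∑ k, W i k := by
    rw [← Finset.sum_erase Finset.univ (hdiag i), Finset.mul_sum]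
    refine Finset.sum_congr rfl fun j hj => ?_
    have hij : i ≠ j := (Finset.ne_of_mem_erase hj).symm
    have : 0 ≤ (1 - α i) * W i j := mul_nonneg (by linarith) (hW i j)
    rw [Mmat_apply, if_neg hij, if_neg hij, zero_sub, add_zero, mul_neg, norm_neg,
      Real.norm_of_nonneg this]
  have hon : ‖Mmat W α i i‖ = (1 - α i) * (∑ k, W i k) + α i := by
    rw [Mmat_apply, if_pos rfl, if_pos rfl, hdiag, sub_zero, Real.norm_of_nonneg (by linarith)]
  rw [hoff, hon]
  linarith

/-- The exact second-order expansion of agent `i`'s cost along a unilateral deviation. -/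
lemma cost_update {n : ℕ} (W : Matrix (Fin n) (Fin n) ℝ) (hdiag : ∀ i, W i i = 0)
    (α s z : Fin n → ℝ) (i : Fin n) (d : ℝ) :
    cost W α s i (Function.update z i (z i + d)) =
      cost W α s i z + ((1 - α i) * (∑ j, W i j) + α i) * d ^ 2
        + 2 * d * ((Mmat W α *ᵥ z) i - α i * s i) := by
  have hsum : ∑ j, W i j * (z i + d - Function.update z i (z i + d) j) ^ 2 =
      ∑ j, W i j * (z i - z j) ^ 2 + (∑ j, W i j) * d ^ 2
        + 2 * d * ∑ j, W i j * (z i - z j) := by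
    rw [Finset.sum_mul, Finset.mul_sum, ← Finset.sum_add_distrib, ← Finset.sum_add_distrib]
    refine Finset.sum_congr rfl fun j _ => ?_
    by_cases hj : j = i
    · subst hj
      simp [hdiag]
    · rw [Function.update_of_ne hj]
      ring
  rw [Mmat_mulVec]
  simp only [cost, Function.update_self, hsum]
  ring

/-- The Nash condition is the system of first-order conditions `M z = A s`. -/
lemma nash_iff {n : ℕ} (W : Matrix (Fin n) (Fin n) ℝ) (hW : ∀ i j, 0 ≤ W i j)
    (hdiag : ∀ i, W i i = 0) (α : Fin n → ℝ) (hα : ∀ i, α i ∈ Set.Ioo (0 : ℝ) 1)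
    (s z : Fin n → ℝ) :
    (∀ i, ∀ t : ℝ, cost W α s i z ≤ cost W α s i (Function.update z i t)) ↔
      Mmat W α *ᵥ z = Matrix.diagonal α *ᵥ s := by
  have hk : ∀ i, 0 < (1 - α i) * (∑ j, W i j) + α i := fun i =>
    add_pos_of_nonneg_of_pos
      (mul_nonneg (by linarith [(hα i).2]) (Finset.sum_nonneg fun j _ => hW i j)) (hα i).1
  constructor
  · intro h
    ext i
    rw [Matrix.mulVec_diagonal]
    -- The quadratic `k d² + 2 d g` is minimized at `d = -g / k`, with value `-g² / k`.
    have h1 := h i (z i + -((Mmat W α *ᵥ z) i - α i * s i) / ((1 - α i) * (∑ j, W i j) + α i))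
    rw [cost_update W hdiag] at h1
    have hki := hk i
    set k := (1 - α i) * (∑ j, W i j) + α i
    set g := (Mmat W α *ᵥ z) i - α i * s i with hg
    have h2 : k * (-g / k) ^ 2 + 2 * (-g / k) * g = -(g ^ 2 / k) := by
      field_simp
      ring
    have h3 : g ^ 2 / k ≤ 0 := by linarith
    have h4 : g ^ 2 ≤ 0 := by
      rwa [div_le_iff₀ hki, zero_mul] at h3
    have h5 : g = 0 := pow_eq_zero_iff (two_ne_zero) |>.mp (le_antisymm h4 (sq_nonneg g))
    linarith
  · intro h i t
    have h1 := cost_update W hdiag α s z i (t - z i)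
    rw [h, Matrix.mulVec_diagonal, sub_self, mul_zero, add_zero, add_sub_cancel] at h1
    rw [h1]
    linarith [mul_nonneg (hk i).le (sq_nonneg (t - z i))]

/-- `z = Bs` is the unique Nash equilibrium of the Friedkin–Johnsen opinion formation game:
each coordinate `z_i` minimizes agent `i`'s cost over unilateral deviations, and any profile
with this property equals `Bs`. -/
theorem stmt1 (n : ℕ) (W : Matrix (Fin (n + 1)) (Fin (n + 1)) ℝ)
    (hWsymm : W.IsSymm) (hWnonneg : ∀ i j, 0 ≤ W i j) (hWdiag : ∀ i, W i i = 0)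
    (α : Fin (n + 1) → ℝ) (hα : ∀ i, α i ∈ Set.Ioo (0 : ℝ) 1)
    (s : Fin (n + 1) → ℝ) :
    (∀ i, ∀ t : ℝ,
      cost W α s i ((Bmat W α).mulVec s) ≤
        cost W α s i (Function.update ((Bmat W α).mulVec s) i t)) ∧
    (∀ z : Fin (n + 1) → ℝ,
      (∀ i, ∀ t : ℝ, cost W α s i z ≤ cost W α s i (Function.update z i t)) →
      z = (Bmat W α).mulVec s) := by
  have hu := isUnit_det_Mmat W hWnonneg hWdiag α hα
  have hB : Bmat W α *ᵥ s = (Mmat W α)⁻¹ *ᵥ (Matrix.diagonal α *ᵥ s) :=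
    (Matrix.mulVec_mulVec _ _ _).symm
  constructor
  · rw [nash_iff W hWnonneg hWdiag α hα, hB, Matrix.mulVec_mulVec, Matrix.mul_nonsing_inv _ hu,
      Matrix.one_mulVec]
  · intro z hz
    rw [nash_iff W hWnonneg hWdiag α hα] at hz
    rw [hB, ← hz, Matrix.mulVec_mulVec, Matrix.nonsing_inv_mul _ hu, Matrix.one_mulVec]
end

section
/- Suppose all agents share susceptibility α ∈ (0,1); set α̃ = α/(1−α), B = α̃(L + α̃I)^{-1}, and D_B = diag(B_11,…,B_nn). Define Q' = (1/α̃²) D_B L D_B + (1/α̃) B^{-1} D_B² B^{-1} − (2/α̃) B^{-1} D_B² + (1/α̃) D_B². Then the spectral norm of Q' satisfies ‖Q'‖₂ ≤ (λ_n + 4α̃)(λ_n + α̃)/α̃³, where λ_n is the spectral radius of L. -/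
/-!
The bound is the triangle inequality applied to the four summands of `Q'`, using
`‖L‖ ≤ λ_n`, `‖B⁻¹‖ ≤ (λ_n + α̃)/α̃` and `‖D_B‖ ≤ 1`; the four resulting terms add up to
`λ_n/α̃² + (λ_n + α̃)²/α̃³ + 2(λ_n + α̃)/α̃² + 1/α̃ = (λ_n + 4α̃)(λ_n + α̃)/α̃³` exactly.

The three norm bounds come from the spectral decomposition `L = Uᵀ diag(λ) U`, where the rows of the
orthogonal matrix `U` are the eigenvectors: `L`, `B` and `B⁻¹` are all of the form `Uᵀ diag(μ) U`,
which has norm at most `max |μ_k|` (`norm_conj_diagonal_le`), and the diagonal entries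
`∑ k, μ_k u_k(i)²` of `B` are convex combinations of the numbers `μ_k = α̃/(λ_k + α̃) ∈ [0, 1]`
(`abs_conj_diagonal_apply_self_le`).
-/

open Matrix

/-- The spectral norm (ℓ₂ operator norm) of a real matrix. -/
noncomputable def specNorm {n : ℕ} (M : Matrix (Fin n) (Fin n) ℝ) : ℝ :=
  ‖Matrix.toEuclideanCLM (𝕜 := ℝ) M‖

section
open scoped Matrix.Norms.L2Operator

variable {m : Type*} [Fintype m] [DecidableEq m]

lemma norm_diagonal_le_of_abs_le {d : m → ℝ} {c : ℝ} (hc : 0 ≤ c) (h : ∀ i, |d i| ≤ c) :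
    ‖(diagonal d : Matrix m m ℝ)‖ ≤ c := by
  rw [Matrix.l2_opNorm_diagonal]
  exact (pi_norm_le_iff_of_nonneg hc).2 h

lemma norm_conj_diagonal_le {U : Matrix m m ℝ} (hU : U * Uᵀ = 1) {d : m → ℝ} {c : ℝ}
    (hc : 0 ≤ c) (h : ∀ i, |d i| ≤ c) : ‖Uᵀ * diagonal d * U‖ ≤ c := by
  have hmem : U ∈ unitary (Matrix m m ℝ) := by
    rw [Unitary.mem_iff, star_eq_conjTranspose, conjTranspose_eq_transpose_of_trivial]
    exact ⟨mul_eq_one_comm.1 hU, hU⟩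
  have hmem' : Uᵀ ∈ unitary (Matrix m m ℝ) := by
    have := Unitary.star_mem hmem
    rwa [star_eq_conjTranspose, conjTranspose_eq_transpose_of_trivial] at this
  rw [CStarRing.norm_mul_mem_unitary _ hmem, CStarRing.norm_mem_unitary_mul _ hmem']
  exact norm_diagonal_le_of_abs_le hc h

lemma abs_conj_diagonal_apply_self_le {U : Matrix m m ℝ} (hU : U * Uᵀ = 1) {d : m → ℝ} {c : ℝ}
    (h : ∀ i, |d i| ≤ c) (i : m) : |(Uᵀ * diagonal d * U) i i| ≤ c := by
  have hcol : ∑ k, U k i * U k i = 1 := by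
    have hUt : Uᵀ * U = 1 := mul_eq_one_comm.1 hU
    simpa [Matrix.mul_apply] using congrFun (congrFun hUt i) i
  have hval : (Uᵀ * diagonal d * U) i i = ∑ k, d k * (U k i * U k i) := by
    simp only [Matrix.mul_apply (M := Uᵀ * diagonal d), Matrix.mul_diagonal, transpose_apply]
    exact Finset.sum_congr rfl fun k _ => by ring
  rw [hval]
  calc |∑ k, d k * (U k i * U k i)| ≤ ∑ k, |d k * (U k i * U k i)| :=
        Finset.abs_sum_le_sum_abs _ _
    _ ≤ ∑ k, c * (U k i * U k i) := by
        refine Finset.sum_le_sum fun k _ => ?_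
        rw [abs_mul, abs_mul_self]
        exact mul_le_mul_of_nonneg_right (h k) (mul_self_nonneg _)
    _ = c := by rw [← Finset.mul_sum, hcol, mul_one]

/-- The triangle inequality for the four summands of `Q'`, with `C` in the role of `B⁻¹`. -/
lemma norm_four_terms_le {L C D : Matrix m m ℝ} {l t : ℝ} (ht : 0 < t)
    (hL : ‖L‖ ≤ l) (hC : ‖C‖ ≤ (l + t) / t) (hD : ‖D‖ ≤ 1) :
    ‖(1 / t ^ 2) • (D * L * D) + (1 / t) • (C * (D * D) * C) - (2 / t) • (C * (D * D)) +
      (1 / t) • (D * D)‖ ≤ (l + 4 * t) * (l + t) / t ^ 3 := by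
  have hDD : ‖D * D‖ ≤ 1 * 1 := norm_mul_le_of_le hD hD
  have h1 : ‖(1 / t ^ 2) • (D * L * D)‖ ≤ 1 / t ^ 2 * (1 * l * 1) := by
    rw [norm_smul, Real.norm_of_nonneg (by positivity)]
    gcongr
    exact norm_mul_le_of_le (norm_mul_le_of_le hD hL) hD
  have h3 : ‖C * (D * D)‖ ≤ (l + t) / t * (1 * 1) := norm_mul_le_of_le hC hDD
  have h2 : ‖(1 / t) • (C * (D * D) * C)‖ ≤ 1 / t * ((l + t) / t * (1 * 1) * ((l + t) / t)) := by
    rw [norm_smul, Real.norm_of_nonneg (by positivity)]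
    gcongr
    exact norm_mul_le_of_le h3 hC
  have h3' : ‖(2 / t) • (C * (D * D))‖ ≤ 2 / t * ((l + t) / t * (1 * 1)) := by
    rw [norm_smul, Real.norm_of_nonneg (by positivity)]
    gcongr
  have h4 : ‖(1 / t) • (D * D)‖ ≤ 1 / t * (1 * 1) := by
    rw [norm_smul, Real.norm_of_nonneg (by positivity)]
    gcongr
  refine (norm_add_le_of_le (norm_sub_le_of_le (norm_add_le_of_le h1 h2) h3') h4).trans_eq ?_
  field_simp
  ring

lemma specNorm_eq_norm {n : ℕ} (M : Matrix (Fin n) (Fin n) ℝ) : specNorm M = ‖M‖ := rfl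

end

/-- Spectral decomposition from an orthonormal eigenbasis, written as the rows of `U`. -/
lemma eq_conj_diagonal_of_eigenvectors {m : Type*} [Fintype m] [DecidableEq m]
    {L U : Matrix m m ℝ} {d : m → ℝ} (hU : U * Uᵀ = 1)
    (heig : ∀ i, L *ᵥ U i = d i • U i) : L = Uᵀ * diagonal d * U := by
  have hLU : L * Uᵀ = Uᵀ * diagonal d := by
    ext i j
    have := congrFun (heig j) i
    rw [Matrix.mul_diagonal, transpose_apply, mul_comm]
    exact this
  rw [← hLU, Matrix.mul_assoc, mul_eq_one_comm.1 hU, Matrix.mul_one]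

/-- With shared susceptibility `α`, `α̃ = α/(1−α)`, `B = α̃ (L + α̃ I)⁻¹`, and
`D_B = diag(B_11,…,B_nn)`, the matrix
`Q' = (1/α̃²) D_B L D_B + (1/α̃) B⁻¹ D_B² B⁻¹ − (2/α̃) B⁻¹ D_B² + (1/α̃) D_B²`
satisfies `‖Q'‖₂ ≤ (λ_n + 4α̃)(λ_n + α̃)/α̃³`, where `λ_n` is the spectral radius of `L`. -/
theorem stmt9 (n : ℕ) (W : Matrix (Fin (n + 1)) (Fin (n + 1)) ℝ)
    (hWsymm : W.IsSymm) (hWnonneg : ∀ i j, 0 ≤ W i j) (hWdiag : ∀ i, W i i = 0)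
    (a : ℝ) (ha : a ∈ Set.Ioo (0 : ℝ) 1) (atil : ℝ) (hatil : atil = a / (1 - a))
    (B : Matrix (Fin (n + 1)) (Fin (n + 1)) ℝ)
    (hB : B = atil • (Lap W + atil • (1 : Matrix (Fin (n + 1)) (Fin (n + 1)) ℝ))⁻¹)
    (DB : Matrix (Fin (n + 1)) (Fin (n + 1)) ℝ)
    (hDB : DB = Matrix.diagonal fun i => B i i)
    (lam : Fin (n + 1) → ℝ) (hmono : Monotone lam) (hlam0 : lam 0 = 0)
    (u : Fin (n + 1) → Fin (n + 1) → ℝ)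
    (hortho : ∀ i j, u i ⬝ᵥ u j = if i = j then (1 : ℝ) else 0)
    (heig : ∀ i, (Lap W).mulVec (u i) = lam i • u i)
    (Q' : Matrix (Fin (n + 1)) (Fin (n + 1)) ℝ)
    (hQ' : Q' = (1 / atil ^ 2) • (DB * Lap W * DB) + (1 / atil) • (B⁻¹ * (DB * DB) * B⁻¹) -
      (2 / atil) • (B⁻¹ * (DB * DB)) + (1 / atil) • (DB * DB)) :
    specNorm Q' ≤ (lam (Fin.last n) + 4 * atil) * (lam (Fin.last n) + atil) / atil ^ 3 := by
  have ht : 0 < atil := by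
    rw [hatil]
    exact div_pos ha.1 (sub_pos.2 ha.2)
  have hlam : ∀ i, 0 ≤ lam i := fun i => hlam0 ▸ hmono (Fin.zero_le i)
  have hlast : ∀ i, lam i ≤ lam (Fin.last n) := fun i => hmono (Fin.le_last i)
  obtain ⟨U, hUdef⟩ : ∃ U : Matrix (Fin (n + 1)) (Fin (n + 1)) ℝ, U = Matrix.of u := ⟨_, rfl⟩
  have hU : U * Uᵀ = 1 := by
    ext i j
    rw [Matrix.one_apply, ← hortho i j, hUdef]
    rfl
  have hUt : Uᵀ * U = 1 := mul_eq_one_comm.1 hU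
  have hL : Lap W = Uᵀ * diagonal lam * U :=
    eq_conj_diagonal_of_eigenvectors hU fun i => by rw [hUdef]; exact heig i
  -- Matrices of the form `Uᵀ diag(d) U` multiply like their spectra.
  have hmul : ∀ d e : Fin (n + 1) → ℝ, (Uᵀ * diagonal d * U) * (Uᵀ * diagonal e * U) =
      Uᵀ * diagonal (fun i => d i * e i) * U := by
    intro d e
    rw [← diagonal_mul_diagonal]
    calc _ = Uᵀ * diagonal d * (U * Uᵀ) * diagonal e * U := by simp only [Matrix.mul_assoc]
      _ = _ := by rw [hU, Matrix.mul_one, Matrix.mul_assoc Uᵀ]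
  have hone : Uᵀ * diagonal (fun _ => (1 : ℝ)) * U = 1 := by
    rw [diagonal_one, Matrix.mul_one, hUt]
  have hshift : Lap W + atil • (1 : Matrix (Fin (n + 1)) (Fin (n + 1)) ℝ) =
      Uᵀ * diagonal (fun i => lam i + atil) * U := by
    rw [← diagonal_add, Matrix.mul_add, Matrix.add_mul, ← hL, ← smul_one_eq_diagonal,
      Matrix.mul_smul, Matrix.smul_mul, Matrix.mul_one, hUt]
  have hpos : ∀ i, 0 < lam i + atil := fun i => add_pos_of_nonneg_of_pos (hlam i) ht
  have hBdiag : B = Uᵀ * diagonal (fun i => atil * (lam i + atil)⁻¹) * U := by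
    have hinv : (Lap W + atil • (1 : Matrix (Fin (n + 1)) (Fin (n + 1)) ℝ))⁻¹ =
        Uᵀ * diagonal (fun i => (lam i + atil)⁻¹) * U := by
      apply Matrix.inv_eq_right_inv
      rw [hshift, hmul, ← hone]
      simp only [mul_inv_cancel₀ (hpos _).ne']
    rw [hB, hinv, ← Matrix.smul_mul, ← Matrix.mul_smul, ← diagonal_smul]
    rfl
  have hBinv : B⁻¹ = Uᵀ * diagonal (fun i => (lam i + atil) / atil) * U := by
    apply Matrix.inv_eq_right_inv
    rw [hBdiag, hmul, ← hone]
    congr 3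
    funext i
    have := (hpos i).ne'
    field_simp
  rw [specNorm_eq_norm, hQ']
  refine norm_four_terms_le ht ?_ ?_ ?_
  · rw [hL]
    exact norm_conj_diagonal_le hU (hlam _) fun i => by
      rw [abs_of_nonneg (hlam i)]; exact hlast i
  · rw [hBinv]
    refine norm_conj_diagonal_le hU (div_pos (hpos _) ht).le fun i => ?_
    rw [abs_of_pos (div_pos (hpos i) ht)]
    gcongr
    exact hlast i
  · rw [hDB]
    refine norm_diagonal_le_of_abs_le zero_le_one fun i => ?_
    rw [hBdiag]
    refine abs_conj_diagonal_apply_self_le hU (fun k => ?_) i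
    rw [← div_eq_mul_inv, abs_of_pos (div_pos ht (hpos k)), div_le_one (hpos k)]
    exact le_add_of_nonneg_left (hlam k)
end
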